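/- Main theorem: Let Ω = B(0,1) ⊂ ℝ². Given any function φ : [0,δ] → ℝ with δ>0, φ(0)=0, φ(t)>0 for 0<t≤δ, and φ(t)→0 as t→0⁺, there exist a smooth strictly convex function u : closure(Ω) → ℝ and a Lipschitz function h : Ω → ℝ compactly supported in Ω, with |Ω \ Ω_c| = 0 (Ω_c the union of all open subsets of Ω on which h is convex), such that liminf_{t→0⁺} (u_t(0) - (u_t)**(0))/(t·φ(t)) > 0, where u_t = u + t·h and ** denotes Γ-regularization on Ω. -/

import Mathlib

open Set Filter MeasureTheory

/-- The Γ-regularization of `u`: pointwise supremum of all affine functions on `ℝⁿ`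
that are `≤ u` on `Ω`. -/
noncomputable def gammaReg {n : ℕ} (Ω : Set (EuclideanSpace ℝ (Fin n)))
    (u : EuclideanSpace ℝ (Fin n) → ℝ) (x : EuclideanSpace ℝ (Fin n)) : ℝ :=
  sSup {c | ∃ a : EuclideanSpace ℝ (Fin n) →ᵃ[ℝ] ℝ, (∀ y ∈ Ω, a y ≤ u y) ∧ c = a x}

/-!
Let `u` be a smooth strictly convex function so flat at `0` that `u x ≤ t * ‖x‖ ^ 2` whenever
`‖x‖ ≤ φ t`, and let `h` be a pyramid with apex over `0`. Moving from `0` to a point `p` with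
`‖p‖ = φ t` on a coordinate axis, `u + t * h` gains at most `t * φ t ^ 2` from `u` and loses
`t * φ t` from `h`. The same holds at `-p`, so every affine function below `u + t * h` lies at least
`t * φ t * (1 - φ t)` below it at the midpoint `0`.

To build `u`, take a smooth `w ≥ 0` vanishing only at `0` and lying below a generalized inverse of
`φ`, integrate it twice, and sum over the coordinates. Being obtained from coordinates by sums,
differences and maxima, the pyramid is locally affine almost everywhere.
-/

open scoped Topology ContDiff

section FlatFunction

variable {E F : Type*} [NormedAddCommGroup E] [NormedSpace ℝ E]
  [NormedAddCommGroup F] [NormedSpace ℝ F]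

theorem eventually_forall_norm_iteratedFDeriv_smul_le {g : E → F} {n : WithTop ℕ∞} {i : ℕ}
    (hg : ContDiff ℝ n g) (hc : HasCompactSupport g) (hi : i ≤ n) {ε : ℝ} (hε : 0 < ε) :
    ∀ᶠ r in 𝓝 (0 : ℝ), ∀ x, ‖iteratedFDeriv ℝ i (r • g) x‖ ≤ ε := by
  obtain ⟨R, hR⟩ := (hg.continuous_iteratedFDeriv hi).norm.bddAbove_range_of_hasCompactSupport
    ((hc.iteratedFDeriv i).comp_left norm_zero)
  have hlim : Tendsto (fun r : ℝ => |r| * R) (𝓝 0) (𝓝 0) := by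
    simpa using (continuous_abs.tendsto (0 : ℝ)).mul_const R
  filter_upwards [hlim.eventually_le_const hε] with r hr x
  calc ‖iteratedFDeriv ℝ i (r • g) x‖ = |r| * ‖iteratedFDeriv ℝ i g x‖ := by
        rw [iteratedFDeriv_const_smul_apply (hg.contDiffAt.of_le hi), norm_smul, Real.norm_eq_abs]
    _ ≤ |r| * R := by gcongr; exact hR (mem_range_self x)
    _ ≤ ε := hr

theorem exists_pos_smul_contDiff_tsum [CompleteSpace F] {g : ℕ → E → F}
    (hg : ∀ k, ContDiff ℝ ∞ (g k)) (hc : ∀ k, HasCompactSupport (g k)) {v : ℕ → ℝ}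
    (hv : ∀ k, 0 < v k) (hsum : Summable v) :
    ∃ r : ℕ → ℝ, (∀ k, 0 < r k) ∧ (∀ k x, ‖r k • g k x‖ ≤ v k) ∧
      ContDiff ℝ ∞ fun x => ∑' k, r k • g k x := by
  have hsmall : ∀ k, ∃ r : ℝ, 0 < r ∧ ∀ i ≤ k, ∀ x, ‖iteratedFDeriv ℝ i (r • g k) x‖ ≤ v k := by
    intro k
    have hev : ∀ᶠ r in 𝓝 (0 : ℝ), ∀ i ∈ Iic k, ∀ x, ‖iteratedFDeriv ℝ i (r • g k) x‖ ≤ v k :=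
      (eventually_all_finite (finite_Iic k)).2 fun i _ =>
        eventually_forall_norm_iteratedFDeriv_smul_le (hg k) (hc k) (mod_cast le_top) (hv k)
    exact (eventually_mem_nhdsWithin.and (hev.filter_mono nhdsWithin_le_nhds) :
      ∀ᶠ r in 𝓝[>] (0 : ℝ), _).exists
  choose r hr0 hr using hsmall
  refine ⟨r, hr0, fun k x => ?_, ?_⟩
  · simpa only [norm_iteratedFDeriv_zero] using! hr k 0 (Nat.zero_le k) x
  · refine contDiff_tsum_of_eventually (fun k => (hg k).const_smul (r k))
      (fun _ _ => hsum) fun i _ => ?_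
    rw [Nat.cofinite_eq_atTop]
    filter_upwards [eventually_ge_atTop i] with k hk using hr k i hk

variable [FiniteDimensional ℝ E]

theorem exists_contDiff_support_eq_iUnion_le_tsum {V : ℕ → Set E} (hV : ∀ k, IsOpen (V k))
    (hVb : ∀ k, Bornology.IsBounded (V k)) {v : ℕ → ℝ} (hv : ∀ k, 0 < v k) (hsum : Summable v) :
    ∃ w : E → ℝ, ContDiff ℝ ∞ w ∧ (∀ x, 0 ≤ w x) ∧ Function.support w = ⋃ k, V k ∧
      ∀ x, w x ≤ ∑' k, (V k).indicator (fun _ => v k) x := by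
  choose g hgs hg hg01 using fun k => (hV k).exists_contDiff_support_eq (n := ⊤)
  have hgc : ∀ k, HasCompactSupport (g k) := fun k =>
    .of_support_subset_isCompact (hVb k).isCompact_closure ((hgs k).trans_subset subset_closure)
  obtain ⟨r, hr0, hr, hw⟩ := exists_pos_smul_contDiff_tsum hg hgc hv hsum
  have hnonneg : ∀ x k, 0 ≤ r k • g k x := fun x k =>
    smul_nonneg (hr0 k).le (hg01 k (mem_range_self x)).1
  have hmem : ∀ x k, r k • g k x ≠ 0 ↔ x ∈ V k := fun x k => by
    rw [smul_ne_zero_iff_right (hr0 k).ne', ← hgs k, Function.mem_support]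
  have hsummable : ∀ x, Summable fun k => r k • g k x := fun x => .of_norm_bounded hsum (hr · x)
  refine ⟨_, hw, fun x => tsum_nonneg (hnonneg x), ?_, fun x => ?_⟩
  · ext x
    rw [Function.mem_support, Ne, ← (hsummable x).hasSum_iff,
      hasSum_zero_iff_of_nonneg (hnonneg x), mem_iUnion]
    exact Function.ne_iff.trans (exists_congr (hmem x))
  · have hle : ∀ k, r k • g k x ≤ (V k).indicator (fun _ => v k) x := fun k =>
      le_indicator_apply (fun _ => (le_abs_self _).trans (hr k x))
        fun hx => (not_not.1 (mt (hmem x k).1 hx)).le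
    have hindicator : Summable fun k => (V k).indicator (fun _ => v k) x :=
      hsum.of_nonneg_of_le (fun k => indicator_nonneg (fun _ _ => (hv k).le) x)
        fun k => indicator_le_self' (fun _ _ => (hv k).le) x
    exact (hsummable x).tsum_le_tsum hle hindicator

theorem exists_contDiff_support_eq_le {U : Set E} (hU : IsOpen U) {m : E → ℝ}
    (hm : ∀ x ∈ U, ∃ ε > 0, ∀ᶠ y in 𝓝 x, ε ≤ m y) :
    ∃ w : E → ℝ, ContDiff ℝ ∞ w ∧ (∀ x, 0 ≤ w x) ∧ Function.support w = U ∧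
      ∀ x ∈ U, w x ≤ m x := by
  let η : ℕ → ℝ := fun k => 1 / ((k : ℝ) + 1)
  let V : ℕ → Set E := fun k => U ∩ (Metric.ball 0 k ∩ interior {x | η k ≤ m x})
  have hη : ∀ k, 0 < η k := fun k => Nat.one_div_pos_of_nat
  have hη_one : ∀ k, η k ≤ 1 := fun k => by
    simpa [η] using Nat.one_div_le_one_div (α := ℝ) (Nat.zero_le k)
  have hV : ∀ k, IsOpen (V k) := fun k => hU.inter (Metric.isOpen_ball.inter isOpen_interior)
  have hVb : ∀ k, Bornology.IsBounded (V k) := fun k =>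
    Metric.isBounded_ball.subset fun _ hx => hx.2.1
  have hcover : ⋃ k, V k = U := by
    refine (iUnion_subset fun k => inter_subset_left).antisymm fun x hx => mem_iUnion.2 ?_
    obtain ⟨ε, hε, hεm⟩ := hm x hx
    obtain ⟨k, hkx, hkε⟩ := ((tendsto_natCast_atTop_atTop.eventually_gt_atTop ‖x‖).and
      (tendsto_one_div_add_atTop_nhds_zero_nat.eventually_lt_const hε)).exists
    refine ⟨k, hx, mem_ball_zero_iff.2 hkx, mem_interior_iff_mem_nhds.2 ?_⟩
    exact hεm.mono fun _ hy => hkε.le.trans hy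
  have hgeom : HasSum (fun k : ℕ => (1 : ℝ) / 2 / 2 ^ k) 1 := hasSum_geometric_two' 1
  have hsum : Summable fun k => η k * (1 / 2 / 2 ^ k) :=
    hgeom.summable.of_nonneg_of_le (fun k => mul_nonneg (hη k).le (by positivity)) fun k =>
      mul_le_of_le_one_left (by positivity) (hη_one k)
  obtain ⟨w, hw, hw0, hws, hwle⟩ := exists_contDiff_support_eq_iUnion_le_tsum hV hVb
    (fun k => mul_pos (hη k) (by positivity)) hsum
  refine ⟨w, hw, hw0, hws.trans hcover, fun x hx => (hwle x).trans ?_⟩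
  obtain ⟨ε, hε, hεm⟩ := hm x hx
  have hmx : 0 ≤ m x := hε.le.trans hεm.self_of_nhds
  have hterm : ∀ k, (V k).indicator (fun _ => η k * (1 / 2 / 2 ^ k)) x ≤ m x * (1 / 2 / 2 ^ k) :=
    fun k => indicator_apply_le' (fun hxk => mul_le_mul_of_nonneg_right
      (show η k ≤ m x from interior_subset (s := {x | η k ≤ m x}) hxk.2.2) (by positivity))
      fun _ => mul_nonneg hmx (by positivity)
  have hm_sum : HasSum (fun k : ℕ => m x * (1 / 2 / 2 ^ k)) (m x) := by
    simpa only [mul_one] using hgeom.mul_left (m x)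
  exact tsum_le_of_sum_le' hmx fun s => (Finset.sum_le_sum fun k _ => hterm k).trans
    (sum_le_hasSum s (fun k _ => mul_nonneg hmx (by positivity)) hm_sum)

theorem exists_contDiff_flat_of_tendsto {φ : ℝ → ℝ} (hφ : Tendsto φ (𝓝[>] 0) (𝓝 0)) :
    ∃ w : E → ℝ, ContDiff ℝ ∞ w ∧ (∀ x, 0 ≤ w x) ∧ Function.support w = {0}ᶜ ∧
      ∀ t > 0, ∀ x, ‖x‖ ≤ φ t → w x ≤ t := by
  -- A generalized inverse of `φ`, capped at `1` because `sInf ∅ = 0`.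
  let m : E → ℝ := fun x => sInf (insert 1 {t | 0 < t ∧ ‖x‖ ≤ φ t})
  have hm : ∀ x ∈ ({0}ᶜ : Set E), ∃ ε > 0, ∀ᶠ y in 𝓝 x, ε ≤ m y := by
    intro x hx
    have hx' : 0 < ‖x‖ := norm_pos_iff.2 hx
    obtain ⟨ε, hε, hφε⟩ := mem_nhdsGT_iff_exists_Ioo_subset.1
      (hφ.eventually_lt_const (half_pos hx'))
    refine ⟨min 1 ε, lt_min one_pos hε, ?_⟩
    filter_upwards [continuous_norm.continuousAt.eventually_const_lt (half_lt_self hx')] with y hy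
    refine le_csInf (insert_nonempty _ _) ?_
    rintro t (rfl | ⟨ht, hyt⟩)
    · exact min_le_left _ _
    · refine (min_le_right _ _).trans (not_lt.1 fun htε => ?_)
      exact (hφε ⟨ht, htε⟩).not_gt (hy.trans_le hyt)
  obtain ⟨w, hw, hw0, hws, hwm⟩ := exists_contDiff_support_eq_le isOpen_compl_singleton hm
  refine ⟨w, hw, hw0, hws, fun t ht x hxt => ?_⟩
  rcases eq_or_ne x 0 with rfl | hx
  · have h0 : w 0 = 0 := Function.notMem_support.1 (by simp [hws])
    exact h0.trans_le ht.le
  · have hbdd : BddBelow (insert 1 {t | 0 < t ∧ ‖x‖ ≤ φ t}) :=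
      BddBelow.insert 1 ⟨0, fun _ hs => hs.1.le⟩
    exact (hwm x hx).trans (csInf_le hbdd (Or.inr ⟨ht, hxt⟩))

end FlatFunction

section DoublePrimitive

/-- The antiderivative of the antiderivative of `w`, both normalized to vanish at `0`. It is used
to produce a convex function with prescribed second derivative `w`. -/
noncomputable def doublePrimitive (w : ℝ → ℝ) (x : ℝ) : ℝ :=
  ∫ s in (0 : ℝ)..x, ∫ y in (0 : ℝ)..s, w y

variable {w : ℝ → ℝ}

theorem contDiff_intervalIntegral {F : Type*} [NormedAddCommGroup F] [NormedSpace ℝ F]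
    [CompleteSpace F] {g : ℝ → F} (hg : ContDiff ℝ ∞ g) (a : ℝ) :
    ContDiff ℝ ∞ fun x => ∫ s in a..x, g s := by
  refine contDiff_infty_iff_deriv.2 ⟨fun x => ?_, ?_⟩
  · exact (hg.continuous.integral_hasStrictDerivAt a x).hasDerivAt.differentiableAt
  · rwa [funext (hg.continuous.deriv_integral g a)]

theorem strictMono_intervalIntegral (hw : Continuous w) (hw0 : ∀ x, 0 ≤ w x)
    (hws : Dense (Function.support w)) (c : ℝ) : StrictMono fun x => ∫ s in c..x, w s := by
  intro a b hab
  obtain ⟨x, hx, hax, hxb⟩ := hws.exists_between hab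
  rw [← sub_pos, intervalIntegral.integral_interval_sub_left (hw.intervalIntegrable _ _)
    (hw.intervalIntegrable _ _)]
  exact intervalIntegral.integral_pos hab hw.continuousOn (fun y _ => hw0 y)
    ⟨x, ⟨hax.le, hxb.le⟩, (hw0 x).lt_of_ne' hx⟩

theorem contDiff_doublePrimitive (hw : ContDiff ℝ ∞ w) : ContDiff ℝ ∞ (doublePrimitive w) :=
  contDiff_intervalIntegral (contDiff_intervalIntegral hw 0) 0

theorem strictConvexOn_doublePrimitive (hw : Continuous w) (hw0 : ∀ x, 0 ≤ w x)
    (hws : Dense (Function.support w)) : StrictConvexOn ℝ univ (doublePrimitive w) := by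
  have hcont : Continuous fun x => ∫ s in (0 : ℝ)..x, w s :=
    intervalIntegral.continuous_primitive hw.intervalIntegrable 0
  refine StrictMono.strictConvexOn_univ_of_deriv
    (intervalIntegral.continuous_primitive hcont.intervalIntegrable 0) ?_
  rw [show deriv (doublePrimitive w) = fun x => ∫ s in (0 : ℝ)..x, w s from
    funext (hcont.deriv_integral _ 0)]
  exact strictMono_intervalIntegral hw hw0 hws 0

theorem doublePrimitive_zero (w : ℝ → ℝ) : doublePrimitive w 0 = 0 :=
  intervalIntegral.integral_same

theorem abs_doublePrimitive_le {C x : ℝ} (hC : ∀ y, |y| ≤ |x| → |w y| ≤ C) :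
    |doublePrimitive w x| ≤ C * x ^ 2 := by
  have abs_le_of_mem : ∀ {y z : ℝ}, y ∈ uIoc 0 z → |y| ≤ |z| := fun hy => by
    simpa using abs_sub_left_of_mem_uIcc (uIoc_subset_uIcc hy)
  have hC0 : 0 ≤ C := (abs_nonneg _).trans (hC x le_rfl)
  have hinner : ∀ s ∈ uIoc 0 x, ‖∫ y in (0 : ℝ)..s, w y‖ ≤ C * |x| := by
    intro s hs
    calc ‖∫ y in (0 : ℝ)..s, w y‖ ≤ C * |s - 0| :=
          intervalIntegral.norm_integral_le_of_norm_le_const fun y hy =>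
            hC y ((abs_le_of_mem hy).trans (abs_le_of_mem hs))
      _ ≤ C * |x| := by rw [sub_zero]; exact mul_le_mul_of_nonneg_left (abs_le_of_mem hs) hC0
  calc |doublePrimitive w x| ≤ C * |x| * |x - 0| :=
        intervalIntegral.norm_integral_le_of_norm_le_const hinner
    _ = C * x ^ 2 := by rw [sub_zero, mul_assoc, abs_mul_abs_self, sq]

end DoublePrimitive

section SeparableSum

variable {ι : Type*} [Fintype ι]

theorem strictConvexOn_sum_comp_apply {f : ℝ → ℝ} (hf : StrictConvexOn ℝ univ f) :
    StrictConvexOn ℝ univ fun x : EuclideanSpace ℝ ι => ∑ i, f (x i) := by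
  refine ⟨convex_univ, fun x _ y _ hxy a b ha hb hab => ?_⟩
  obtain ⟨j, hj⟩ : ∃ j, x j ≠ y j := by
    contrapose! hxy
    exact PiLp.ext hxy
  simp only [smul_eq_mul, Finset.mul_sum, ← Finset.sum_add_distrib, PiLp.add_apply,
    PiLp.smul_apply]
  exact Finset.sum_lt_sum
    (fun i _ => hf.convexOn.2 (mem_univ _) (mem_univ _) ha.le hb.le hab)
    ⟨j, Finset.mem_univ j, hf.2 (mem_univ _) (mem_univ _) hj ha hb hab⟩

theorem exists_strictConvexOn_flat_of_tendsto {φ : ℝ → ℝ} (hφ : Tendsto φ (𝓝[>] 0) (𝓝 0)) :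
    ∃ u : EuclideanSpace ℝ ι → ℝ, ContDiff ℝ ∞ u ∧ StrictConvexOn ℝ univ u ∧ u 0 = 0 ∧
      ∀ t > 0, ∀ x, ‖x‖ ≤ φ t → u x ≤ t * ‖x‖ ^ 2 := by
  obtain ⟨w, hw, hw0, hws, hwφ⟩ := exists_contDiff_flat_of_tendsto (E := ℝ) hφ
  have hdense : Dense (Function.support w) := hws ▸ dense_compl_singleton 0
  have hsmooth := contDiff_doublePrimitive hw
  refine ⟨fun x => ∑ i, doublePrimitive w (x i), by fun_prop,
    strictConvexOn_sum_comp_apply (strictConvexOn_doublePrimitive hw.continuous hw0 hdense),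
    by simp [doublePrimitive_zero], fun t ht x hx => ?_⟩
  have hcoord : ∀ i, doublePrimitive w (x i) ≤ t * x i ^ 2 := by
    refine fun i => (le_abs_self _).trans (abs_doublePrimitive_le fun y hy => ?_)
    rw [abs_of_nonneg (hw0 y)]
    exact hwφ t ht y (hy.trans ((PiLp.norm_apply_le x i).trans hx))
  calc ∑ i, doublePrimitive w (x i) ≤ ∑ i, t * x i ^ 2 := Finset.sum_le_sum fun i _ => hcoord i
    _ = t * ‖x‖ ^ 2 := by rw [← Finset.mul_sum, EuclideanSpace.real_norm_sq_eq]

end SeparableSum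

section LocallyAffine

variable {E : Type*} [NormedAddCommGroup E] [NormedSpace ℝ E]

/-- `f` is locally affine at `x` if it agrees with an affine function on a neighbourhood of `x`.
Almost everywhere local affinity, unlike almost everywhere local convexity, is stable under
subtraction; this is how `volume (Ω \ Ω_c) = 0` is obtained. -/
def LocallyAffineAt (f : E → ℝ) (x : E) : Prop :=
  ∃ a : E →ᵃ[ℝ] ℝ, f =ᶠ[𝓝 x] a

namespace LocallyAffineAt

variable {f g : E → ℝ} {x : E}

theorem congr (hf : LocallyAffineAt f x) (hgf : g =ᶠ[𝓝 x] f) : LocallyAffineAt g x :=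
  let ⟨a, ha⟩ := hf
  ⟨a, hgf.trans ha⟩

protected theorem neg (hf : LocallyAffineAt f x) : LocallyAffineAt (-f) x :=
  let ⟨a, ha⟩ := hf
  ⟨-a, ha.neg⟩

protected theorem add (hf : LocallyAffineAt f x) (hg : LocallyAffineAt g x) :
    LocallyAffineAt (f + g) x :=
  let ⟨a, ha⟩ := hf
  let ⟨b, hb⟩ := hg
  ⟨a + b, ha.add hb⟩

protected theorem sum {ι : Type*} {s : Finset ι} {f : ι → E → ℝ}
    (hf : ∀ i ∈ s, LocallyAffineAt (f i) x) : LocallyAffineAt (∑ i ∈ s, f i) x :=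
  Finset.sum_induction f (LocallyAffineAt · x) (fun _ _ => .add) ⟨0, .rfl⟩ hf

theorem exists_convexOn (hf : LocallyAffineAt f x) {Ω : Set E} (hΩ : Ω ∈ 𝓝 x) :
    ∃ U ⊆ Ω, IsOpen U ∧ x ∈ U ∧ ConvexOn ℝ U f := by
  obtain ⟨a, ha⟩ := hf
  obtain ⟨ε, hε, hball⟩ := Metric.mem_nhds_iff.1 (ha.and hΩ)
  have ha_conv : ConvexOn ℝ univ a := (convexOn_id convex_univ).comp_affineMap a
  exact ⟨Metric.ball x ε, fun y hy => (hball hy).2, Metric.isOpen_ball, Metric.mem_ball_self hε,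
    (ha_conv.subset (subset_univ _) (convex_ball x ε)).congr fun y hy => (hball hy).1.symm⟩

variable [FiniteDimensional ℝ E]

theorem continuousAt (hf : LocallyAffineAt f x) : ContinuousAt f x :=
  let ⟨a, ha⟩ := hf
  a.continuous_of_finiteDimensional.continuousAt.congr ha.symm

theorem sup_of_ne (hf : LocallyAffineAt f x) (hg : LocallyAffineAt g x) (hne : f x ≠ g x) :
    LocallyAffineAt (f ⊔ g) x := by
  rcases hne.lt_or_gt with hlt | hlt
  · refine hg.congr ?_
    filter_upwards [hf.continuousAt.eventually_lt hg.continuousAt hlt] with y hy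
    exact sup_eq_right.2 hy.le
  · refine hf.congr ?_
    filter_upwards [hg.continuousAt.eventually_lt hf.continuousAt hlt] with y hy
    exact sup_eq_left.2 hy.le

end LocallyAffineAt

variable [MeasurableSpace E] {μ : Measure E}

theorem measure_diff_sUnion_convexOn_eq_zero {f : E → ℝ} (hf : ∀ᵐ x ∂μ, LocallyAffineAt f x)
    {Ω : Set E} (hΩ : IsOpen Ω) :
    μ (Ω \ ⋃₀ {U | U ⊆ Ω ∧ IsOpen U ∧ ConvexOn ℝ U f}) = 0 := by
  refine measure_eq_zero_iff_ae_notMem.2 (hf.mono fun x hfx hx => hx.2 ?_)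
  obtain ⟨U, hUΩ, hU, hxU, hconv⟩ := hfx.exists_convexOn (hΩ.mem_nhds hx.1)
  exact ⟨U, ⟨hUΩ, hU, hconv⟩, hxU⟩

variable [FiniteDimensional ℝ E] [BorelSpace E] [μ.IsAddHaarMeasure]

theorem measure_setOf_affineMap_eq_zero {a b : E →ᵃ[ℝ] ℝ} (hab : a ≠ b) :
    μ {x | a x = b x} = 0 := by
  let S : AffineSubspace ℝ E := (AffineSubspace.mk' (0 : ℝ) ⊥).comap (a - b)
  have hS : (S : Set E) = {x | a x = b x} := by
    ext x
    simp [S, AffineSubspace.mem_mk', sub_eq_zero]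
  rw [← hS]
  refine Measure.addHaar_affineSubspace μ S fun htop => hab (AffineMap.ext fun x => ?_)
  have hx : x ∈ (S : Set E) := by simp [htop]
  rwa [hS] at hx

theorem ae_locallyAffineAt_sup {f g : E → ℝ}
    (hf : ∀ᵐ x ∂μ, LocallyAffineAt f x) (hg : ∀ᵐ x ∂μ, LocallyAffineAt g x) :
    ∀ᵐ x ∂μ, LocallyAffineAt (f ⊔ g) x := by
  let B : Set E := {x | LocallyAffineAt f x ∧ LocallyAffineAt g x ∧ ¬ LocallyAffineAt (f ⊔ g) x}
  have hB : μ B = 0 := by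
    refine measure_null_of_locally_null B fun x hx => ?_
    obtain ⟨⟨a, ha⟩, ⟨b, hb⟩, hsup⟩ := id hx
    have hab : a ≠ b := by
      rintro rfl
      refine hsup ⟨a, ?_⟩
      filter_upwards [ha, hb] with y hya hyb
      rw [Pi.sup_apply, hya, hyb, sup_idem]
    refine ⟨{y | a y = b y}, ?_, measure_setOf_affineMap_eq_zero hab⟩
    filter_upwards [self_mem_nhdsWithin, mem_nhdsWithin_of_mem_nhds ha,
      mem_nhdsWithin_of_mem_nhds hb] with y hyB hya hyb
    have hfg : f y = g y := not_not.1 fun hne => hyB.2.2 (hyB.1.sup_of_ne hyB.2.1 hne)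
    exact hya.symm.trans (hfg.trans hyb)
  filter_upwards [hf, hg, measure_eq_zero_iff_ae_notMem.1 hB] with x hfx hgx hx
  exact not_not.1 fun hsup => hx ⟨hfx, hgx, hsup⟩

end LocallyAffine

section Pyramid

variable {ι : Type*} [Fintype ι]

/-- The pyramid of height `ρ` over the `ℓ¹`-ball of radius `ρ`; it plays the role of the
perturbation `h`. -/
def pyramid (ρ : ℝ) (x : EuclideanSpace ℝ ι) : ℝ :=
  max 0 (ρ - ∑ i, |x i|)

theorem pyramid_zero {ρ : ℝ} (hρ : 0 ≤ ρ) : pyramid ρ (0 : EuclideanSpace ℝ ι) = ρ := by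
  simp [pyramid, hρ]

theorem pyramid_single [DecidableEq ι] {ρ r : ℝ} (hr : |r| ≤ ρ) (i : ι) :
    pyramid ρ (EuclideanSpace.single i r) = ρ - |r| := by
  have hsum : ∑ j, |EuclideanSpace.single i r j| = |r| := by
    simp [apply_ite abs]
  rw [pyramid, hsum, max_eq_right (sub_nonneg.2 hr)]

theorem exists_lipschitzWith_pyramid (ρ : ℝ) :
    ∃ K : NNReal, LipschitzWith K (pyramid ρ : EuclideanSpace ℝ ι → ℝ) := by
  have hsum : LipschitzWith (Fintype.card ι) fun x : EuclideanSpace ℝ ι => ∑ i, |x i| := by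
    refine .of_dist_le_mul fun x y => ?_
    calc dist (∑ i, |x i|) (∑ i, |y i|) ≤ ∑ i, dist |x i| |y i| := dist_sum_sum_le _ _ _
      _ ≤ ∑ _i : ι, dist x y := by
        gcongr with i
        rw [dist_eq_norm x y]
        exact (abs_abs_sub_abs_le_abs_sub _ _).trans (PiLp.norm_apply_le (x - y) i)
      _ = (Fintype.card ι : NNReal) * dist x y := by simp
  exact ⟨_, ((LipschitzWith.const ρ).sub hsum).const_max 0⟩

theorem norm_le_sum_abs (x : EuclideanSpace ℝ ι) : ‖x‖ ≤ ∑ i, |x i| := by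
  refine le_of_sq_le_sq ?_ (Finset.sum_nonneg fun i _ => abs_nonneg (x i))
  calc ‖x‖ ^ 2 = ∑ i, |x i| ^ 2 := by simp only [EuclideanSpace.real_norm_sq_eq, sq_abs]
    _ ≤ (∑ i, |x i|) ^ 2 := Finset.sum_sq_le_sq_sum_of_nonneg fun i _ => abs_nonneg (x i)

theorem support_pyramid_subset (ρ : ℝ) :
    Function.support (pyramid ρ : EuclideanSpace ℝ ι → ℝ) ⊆ Metric.closedBall 0 ρ := by
  intro x hx
  have hlt : ∑ i, |x i| < ρ := not_le.1 fun hle => hx (max_eq_left (sub_nonpos.2 hle))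
  exact mem_closedBall_zero_iff.2 ((norm_le_sum_abs x).trans hlt.le)

theorem hasCompactSupport_pyramid (ρ : ℝ) :
    HasCompactSupport (pyramid ρ : EuclideanSpace ℝ ι → ℝ) :=
  .of_support_subset_isCompact (isCompact_closedBall 0 ρ) (support_pyramid_subset ρ)

theorem tsupport_pyramid_subset (ρ : ℝ) :
    tsupport (pyramid ρ : EuclideanSpace ℝ ι → ℝ) ⊆ Metric.closedBall 0 ρ :=
  closure_minimal (support_pyramid_subset ρ) Metric.isClosed_closedBall

theorem ae_locallyAffineAt_pyramid (ρ : ℝ) :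
    ∀ᵐ x : EuclideanSpace ℝ ι, LocallyAffineAt (pyramid ρ) x := by
  have hconst : ∀ (c : ℝ) (x : EuclideanSpace ℝ ι), LocallyAffineAt (fun _ => c) x := fun c x =>
    ⟨AffineMap.const ℝ _ c, .rfl⟩
  have hcoord : ∀ (i : ι) (x : EuclideanSpace ℝ ι), LocallyAffineAt (fun y => y i) x := fun i x =>
    ⟨(EuclideanSpace.proj i : EuclideanSpace ℝ ι →L[ℝ] ℝ).toLinearMap.toAffineMap, .rfl⟩
  have habs : ∀ i : ι, ∀ᵐ x : EuclideanSpace ℝ ι, LocallyAffineAt (fun y => |y i|) x := fun i =>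
    ae_locallyAffineAt_sup (.of_forall (hcoord i)) (.of_forall fun x => (hcoord i x).neg)
  have hcone : ∀ᵐ x : EuclideanSpace ℝ ι, LocallyAffineAt (fun y => ρ - ∑ i, |y i|) x := by
    filter_upwards [ae_all_iff.2 habs] with x hx
    refine ((hconst ρ x).add (LocallyAffineAt.sum fun i (_ : i ∈ Finset.univ) => hx i).neg).congr
      (.of_forall fun y => ?_)
    simp [sub_eq_add_neg]
  exact ae_locallyAffineAt_sup (.of_forall (hconst 0)) hcone

end Pyramid

section GammaReg

variable {n : ℕ} {Ω : Set (EuclideanSpace ℝ (Fin n))}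

theorem gammaReg_le_of_mem_convexHull {v : EuclideanSpace ℝ (Fin n) → ℝ}
    {x : EuclideanSpace ℝ (Fin n)} {B : ℝ} (hB : 0 ≤ B)
    (hx : x ∈ convexHull ℝ {y ∈ Ω | v y ≤ B}) : gammaReg Ω v x ≤ B := by
  refine Real.sSup_le ?_ hB
  rintro _ ⟨a, ha, rfl⟩
  have hconv : Convex ℝ {y | a y ≤ B} := (convex_Iic B).affine_preimage a
  exact convexHull_min (fun y hy => (ha y hy.1).trans hy.2) hconv hx

theorem gammaReg_add_pyramid_le [NeZero n] {u : EuclideanSpace ℝ (Fin n) → ℝ} {ρ r t : ℝ}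
    (hΩ : Metric.closedBall 0 ρ ⊆ Ω) (hr : 0 ≤ r) (hrρ : r ≤ ρ) (ht : 0 ≤ t)
    (hu : ∀ x, ‖x‖ ≤ r → u x ≤ t * ‖x‖ ^ 2) :
    gammaReg Ω (fun x => u x + t * pyramid ρ x) 0 ≤ t * (ρ - r + r ^ 2) := by
  have hB : 0 ≤ t * (ρ - r + r ^ 2) := by have := sub_nonneg.2 hrρ; positivity
  have hmem : ∀ s, |s| = r → EuclideanSpace.single 0 s ∈
      {x ∈ Ω | u x + t * pyramid ρ x ≤ t * (ρ - r + r ^ 2)} := by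
    intro s hs
    have hnorm : ‖EuclideanSpace.single (0 : Fin n) s‖ = r := by simpa using hs
    have hflat := hu _ hnorm.le
    refine ⟨hΩ (mem_closedBall_zero_iff.2 (hnorm.trans_le hrρ)), ?_⟩
    rw [pyramid_single (hs.trans_le hrρ), hs]
    rw [hnorm] at hflat
    linarith
  refine gammaReg_le_of_mem_convexHull hB ?_
  have hmid := (convex_convexHull ℝ _).midpoint_mem
    (subset_convexHull ℝ _ (hmem r (abs_of_nonneg hr)))
    (subset_convexHull ℝ _ (hmem (-r) (by rw [abs_neg, abs_of_nonneg hr])))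
  have hneg : EuclideanSpace.single (0 : Fin n) (-r) = -EuclideanSpace.single 0 r :=
    PiLp.single_neg 2 0
  rwa [hneg, midpoint_self_neg] at hmid

end GammaReg

theorem stmt15_general {n : ℕ} [NeZero n] {Ω : Set (EuclideanSpace ℝ (Fin n))} (hΩ : IsOpen Ω)
    (h0 : 0 ∈ Ω) {φ : ℝ → ℝ} (hφpos : ∀ᶠ t in 𝓝[>] 0, 0 < φ t)
    (hφlim : Tendsto φ (𝓝[>] 0) (𝓝 0)) :
    ∃ u h : EuclideanSpace ℝ (Fin n) → ℝ,
      ContDiff ℝ ∞ u ∧ StrictConvexOn ℝ univ u ∧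
      (∃ K : NNReal, LipschitzWith K h) ∧
      HasCompactSupport h ∧ tsupport h ⊆ Ω ∧
      volume (Ω \ ⋃₀ {U | U ⊆ Ω ∧ IsOpen U ∧ ConvexOn ℝ U h}) = 0 ∧
      (0 : EReal) < liminf (fun t =>
        ((((u 0 + t * h 0) -
            gammaReg Ω (fun x => u x + t * h x) 0) / (t * φ t) : ℝ) : EReal))
        (𝓝[>] 0) := by
  obtain ⟨u, hu, huconv, hu0, hflat⟩ := exists_strictConvexOn_flat_of_tendsto (ι := Fin n) hφlim
  obtain ⟨ρ, hρ, hball⟩ := Metric.nhds_basis_closedBall.mem_iff.1 (hΩ.mem_nhds h0)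
  refine ⟨u, pyramid ρ, hu, huconv, exists_lipschitzWith_pyramid ρ, hasCompactSupport_pyramid ρ,
    (tsupport_pyramid_subset ρ).trans hball,
    measure_diff_sUnion_convexOn_eq_zero (ae_locallyAffineAt_pyramid ρ) hΩ, ?_⟩
  have hhalf : (0 : EReal) < ((1 / 2 : ℝ) : EReal) := EReal.coe_pos.2 one_half_pos
  refine hhalf.trans_le (le_liminf_of_le (by isBoundedDefault) ?_)
  filter_upwards [self_mem_nhdsWithin, hφpos, hφlim.eventually_le_const hρ,
    hφlim.eventually_le_const one_half_pos] with t ht hφt hφρ hφhalf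
  have hgap := gammaReg_add_pyramid_le hball hφt.le hφρ (le_of_lt ht) (hflat t ht)
  rw [EReal.coe_le_coe_iff, hu0, pyramid_zero hρ.le, le_div_iff₀ (mul_pos ht hφt)]
  have hsq : t * φ t ^ 2 ≤ t * φ t * (1 / 2) := by
    rw [sq, ← mul_assoc]
    exact mul_le_mul_of_nonneg_left hφhalf (mul_pos ht hφt).le
  linarith

theorem stmt15 (Ω : Set (EuclideanSpace ℝ (Fin 2)))
    (hΩ : Ω = Metric.ball 0 1)
    (δ : ℝ) (hδ : 0 < δ) (φ : ℝ → ℝ) (hφ0 : φ 0 = 0)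
    (hφpos : ∀ t ∈ Ioc 0 δ, 0 < φ t)
    (hφlim : Tendsto φ (nhdsWithin 0 (Ioi 0)) (nhds 0)) :
    ∃ u h : EuclideanSpace ℝ (Fin 2) → ℝ,
      ContDiffOn ℝ (⊤ : ℕ∞) u (Metric.closedBall 0 1) ∧
      StrictConvexOn ℝ (Metric.closedBall 0 1) u ∧
      (∃ K : NNReal, LipschitzWith K h) ∧
      HasCompactSupport h ∧ tsupport h ⊆ Ω ∧
      volume (Ω \ ⋃₀ {U | U ⊆ Ω ∧ IsOpen U ∧ ConvexOn ℝ U h}) = 0 ∧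
      (0 : EReal) < liminf (fun t =>
        ((((u 0 + t * h 0) -
            gammaReg Ω (fun x => u x + t * h x) 0) / (t * φ t) : ℝ) : EReal))
        (nhdsWithin 0 (Ioi 0)) := by
  obtain ⟨u, h, hu, huconv, hrest⟩ := stmt15_general (hΩ ▸ Metric.isOpen_ball)
    (hΩ ▸ Metric.mem_ball_self one_pos) (mem_of_superset (Ioc_mem_nhdsGT hδ) hφpos) hφlim
  exact ⟨u, h, hu.contDiffOn, huconv.subset (subset_univ _) (convex_closedBall 0 1), hrest⟩
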